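/- Let G be a finite simple graph with 2n+1 vertices and edge weights in a commutative ring, let 2 ≤ k ≤ n, and let a_1, b_1, a_2, b_2, …, a_k, b_k be distinct vertices such that G is noncrossing with respect to the cyclic sequence (a_1, b_1, a_2, b_2, …, a_k, b_k). Set A = {a_1,…,a_k} and B = {b_1,…,b_k}. Then for every partition of A into two disjoint subsets A_1, A_2: Σ_{W⊆B, |W| odd} M(G−W)·M(G−A−(B∖W)) = Σ_{Y⊆B, |Y| ≢ |A_1| (mod 2)} M(G−A_1−Y)·M(G−A_2−(B∖Y)). -/

import Mathlib

/-- A perfect matching of the induced subgraph of `G` on the vertex set `s`,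
represented as a set `m` of edges of `G`: every edge of `m` is an edge of `G`
with both endpoints in `s`, and every vertex of `s` lies in exactly one edge of `m`. -/
def IsPMOn {α : Type*} (G : SimpleGraph α) (s : Finset α) (m : Finset (Sym2 α)) : Prop :=
  (∀ e ∈ m, e ∈ G.edgeSet ∧ ∀ v ∈ e, v ∈ s) ∧ ∀ v ∈ s, ∃! e, e ∈ m ∧ v ∈ e

/-- The number of perfect matchings of the induced subgraph of `G` on `s`. -/
noncomputable def pmCount {α : Type*} (G : SimpleGraph α) (s : Finset α) : ℕ :=
  Nat.card {m : Finset (Sym2 α) // IsPMOn G s m}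

open Classical in
/-- The sum, over all perfect matchings of the induced subgraph of `G` on `s`,
of the product of the weights of the edges of the matching. -/
noncomputable def pmSum {α R : Type*} [Fintype α] [DecidableEq α] [CommRing R]
    (G : SimpleGraph α) (w : Sym2 α → R) (s : Finset α) : R :=
  ∑ m ∈ Finset.univ.filter (fun m : Finset (Sym2 α) => IsPMOn G s m), ∏ e ∈ m, w e

/-- There are two vertex-disjoint paths in `G`, one joining `x₁` to `y₁` and one joining
`x₂` to `y₂`, whose internal vertices avoid `S`. -/
def DisjointPaths {α : Type*} (G : SimpleGraph α) (S : Set α) (x₁ y₁ x₂ y₂ : α) : Prop :=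
  ∃ (p : G.Walk x₁ y₁) (q : G.Walk x₂ y₂), p.IsPath ∧ q.IsPath ∧
    (∀ u ∈ p.support, u ∉ q.support) ∧
    (∀ u ∈ p.support, u ≠ x₁ → u ≠ y₁ → u ∉ S) ∧
    (∀ u ∈ q.support, u ≠ x₂ → u ≠ y₂ → u ∉ S)

/-- `G` is noncrossing with respect to the cyclic sequence given by the list `L`:
there are no indices `i < j < k < l` such that `G` contains two vertex-disjoint paths,
one joining `L[i]` to `L[k]` and one joining `L[j]` to `L[l]`, whose internal vertices
avoid the vertices of `L`. -/
def NoncrossingList {α : Type*} (G : SimpleGraph α) (L : List α) : Prop :=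
  ∀ i j k l : Fin L.length, i < j → j < k → k < l →
    ¬ DisjointPaths G {x | x ∈ L} (L.get i) (L.get k) (L.get j) (L.get l)

/-- `U, W` form a bipartition of the vertices of `G`. -/
def IsBipartition {α : Type*} [Fintype α] [DecidableEq α]
    (G : SimpleGraph α) (U W : Finset α) : Prop :=
  Disjoint U W ∧ U ∪ W = Finset.univ ∧
    ∀ ⦃x y⦄, G.Adj x y → ((x ∈ U ∧ y ∈ W) ∨ (x ∈ W ∧ y ∈ U))

/-- `P` is an `MH`-alternating path, where `MH` is the unique perfect matching of the
induced subgraph of `G` on the vertex set `sH`: `P` is a (nontrivial) path, among any two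
consecutive edges of `P` exactly one lies in `MH`, and for each endpoint the incident edge
of `P` lies in `MH` iff the endpoint belongs to `sH`. -/
def IsAltPath {α : Type*} (G : SimpleGraph α) (sH : Finset α) (MH : Finset (Sym2 α))
    {x y : α} (P : G.Walk x y) : Prop :=
  P.IsPath ∧ P.edges ≠ [] ∧
  P.edges.Chain' (fun e f => e ∈ MH ↔ f ∉ MH) ∧
  (∀ e ∈ P.edges.head?, (e ∈ MH ↔ x ∈ sH)) ∧
  (∀ e ∈ P.edges.getLast?, (e ∈ MH ↔ y ∈ sH))

/-- A family of pairwise vertex-disjoint `MH`-alternating paths in `G` whose set of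
path-endpoints is exactly `A`, each vertex of `A` being an endpoint of exactly one
path of the family. -/
def IsAltPathNest {α : Type*} (G : SimpleGraph α) (sH : Finset α) (MH : Finset (Sym2 α))
    (A : Finset α) (F : Finset (Σ x : α, Σ y : α, G.Walk x y)) : Prop :=
  (∀ p ∈ F, IsAltPath G sH MH p.2.2) ∧
  (∀ p ∈ F, ∀ q ∈ F, p ≠ q → ∀ u ∈ p.2.2.support, u ∉ q.2.2.support) ∧
  (∀ p ∈ F, p.1 ∈ A ∧ p.2.1 ∈ A) ∧
  (∀ v ∈ A, ∃! p, p ∈ F ∧ (v = p.1 ∨ v = p.2.1))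

/-- A 1-factor on `{1, …, n}`: a partition of `Fin n` into pairs, each pair recorded
as an ordered pair `(i, j)` with `i < j`. -/
def IsOneFactor (n : ℕ) (F : Finset (Fin n × Fin n)) : Prop :=
  (∀ p ∈ F, p.1 < p.2) ∧ ∀ v : Fin n, ∃! p, p ∈ F ∧ (v = p.1 ∨ v = p.2)

/-- The crossing number of a 1-factor: the number of pairs of pairs
`(i,j), (k,l)` in `F` with `i < k < j < l`. -/
def crossingNumber (n : ℕ) (F : Finset (Fin n × Fin n)) : ℕ :=
  ((F ×ˢ F).filter (fun q => q.1.1 < q.2.1 ∧ q.2.1 < q.1.2 ∧ q.1.2 < q.2.2)).card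


namespace GC
open Classical in
theorem pm_card {α : Type*} {G : SimpleGraph α} {s : Finset α} {m : Finset (Sym2 α)}
    (h : IsPMOn G s m) : s.card = 2 * m.card := by
  have h1 := Finset.sum_card_bipartiteAbove_eq_sum_card_bipartiteBelow
    (s := s) (t := m) (fun v e => v ∈ e)
  have h2 : ∀ v ∈ s, (Finset.bipartiteAbove (fun v e => v ∈ e) m v).card = 1 := by
    intro v hv
    obtain ⟨e, he, hu⟩ := h.2 v hv
    rw [Finset.card_eq_one]
    refine ⟨e, ?_⟩
    ext f
    simp only [Finset.mem_bipartiteAbove, Finset.mem_singleton]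
    exact ⟨fun hf => hu f hf, fun hf => hf ▸ he⟩
  have h3 : ∀ e ∈ m, (Finset.bipartiteBelow (fun v e => v ∈ e) s e).card = 2 := by
    intro e he
    have h4 := h.1 e he
    induction e with | _ x y
    have hxy : x ≠ y := by
      have := h4.1
      rw [SimpleGraph.mem_edgeSet] at this
      exact this.ne
    rw [← Finset.card_pair hxy]
    congr 1
    ext v
    simp only [Finset.mem_bipartiteBelow, Sym2.mem_iff, Finset.mem_insert, Finset.mem_singleton]
    constructor
    · exact fun h => h.2
    · intro hv
      exact ⟨h4.2 v (by simpa using hv), hv⟩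
  rw [Finset.sum_congr rfl h2, Finset.sum_congr rfl h3] at h1
  simp at h1
  omega

/-- C is a union of components of m -/
def Closed {α : Type*} (C : Finset α) (m : Finset (Sym2 α)) : Prop :=
  ∀ e ∈ m, ∀ u ∈ e, ∀ v ∈ e, u ∈ C → v ∈ C

open Classical in
noncomputable def swap {α : Type*} (C : Finset α) (m₁ m₂ : Finset (Sym2 α)) : Finset (Sym2 α) :=
  m₁.filter (fun e => ¬ ∀ v ∈ e, v ∈ C) ∪ m₂.filter (fun e => ∀ v ∈ e, v ∈ C)

theorem mem_swap {α : Type*} {C : Finset α} {m₁ m₂ : Finset (Sym2 α)} {e : Sym2 α} :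
    e ∈ swap C m₁ m₂ ↔ (e ∈ m₁ ∧ ¬ ∀ v ∈ e, v ∈ C) ∨ (e ∈ m₂ ∧ ∀ v ∈ e, v ∈ C) := by
  classical
  simp only [swap, Finset.mem_union, Finset.mem_filter]

theorem swap_swap {α : Type*} {C : Finset α} {m₁ m₂ : Finset (Sym2 α)} :
    swap C (swap C m₁ m₂) (swap C m₂ m₁) = m₁ := by
  ext e
  simp only [mem_swap]
  tauto

theorem swap_or {α : Type*} {C : Finset α} {m₁ m₂ : Finset (Sym2 α)} {e : Sym2 α} :
    (e ∈ swap C m₁ m₂ ∨ e ∈ swap C m₂ m₁) ↔ (e ∈ m₁ ∨ e ∈ m₂) := by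
  simp only [mem_swap]
  tauto

theorem swap_prod {α R : Type*} [CommRing R] (w : Sym2 α → R)
    {C : Finset α} {m₁ m₂ : Finset (Sym2 α)} :
    (∏ e ∈ swap C m₁ m₂, w e) * (∏ e ∈ swap C m₂ m₁, w e) =
      (∏ e ∈ m₁, w e) * (∏ e ∈ m₂, w e) := by
  classical
  have key : ∀ m₁ m₂ : Finset (Sym2 α), (∏ e ∈ swap C m₁ m₂, w e) =
      (∏ e ∈ m₁.filter (fun e => ¬ ∀ v ∈ e, v ∈ C), w e) *
      (∏ e ∈ m₂.filter (fun e => ∀ v ∈ e, v ∈ C), w e) := by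
    intro m₁ m₂
    rw [← Finset.prod_union]
    · congr 1
    · rw [Finset.disjoint_left]
      intro e h1 h2
      exact (Finset.mem_filter.1 h1).2 (Finset.mem_filter.1 h2).2
  rw [key, key, ← Finset.prod_filter_mul_prod_filter_not m₁ (fun e => ∀ v ∈ e, v ∈ C),
    ← Finset.prod_filter_mul_prod_filter_not m₂ (fun e => ∀ v ∈ e, v ∈ C)]
  ring

theorem swap_pm {α : Type*} [DecidableEq α] {G : SimpleGraph α} {C s₁ s₂ : Finset α}
    {m₁ m₂ : Finset (Sym2 α)} (h₁ : IsPMOn G s₁ m₁) (h₂ : IsPMOn G s₂ m₂)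
    (c₁ : Closed C m₁) (c₂ : Closed C m₂) :
    IsPMOn G ((s₁ \ C) ∪ (s₂ ∩ C)) (swap C m₁ m₂) := by
  constructor
  · intro e he
    rw [mem_swap] at he
    rcases he with ⟨he, hC⟩ | ⟨he, hC⟩
    · refine ⟨(h₁.1 e he).1, fun v hv => ?_⟩
      have hvC : v ∉ C := fun hvC => hC fun u hu => c₁ e he v hv u hu hvC
      simp [hvC, (h₁.1 e he).2 v hv]
    · refine ⟨(h₂.1 e he).1, fun v hv => ?_⟩
      simp [hC v hv, (h₂.1 e he).2 v hv]
  · intro v hv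
    by_cases hvC : v ∈ C
    · have hv2 : v ∈ s₂ := by simpa [hvC] using hv
      obtain ⟨e, he, hu⟩ := h₂.2 v hv2
      refine ⟨e, ⟨mem_swap.2 (Or.inr ⟨he.1, fun u hu => c₂ e he.1 v he.2 u hu hvC⟩), he.2⟩, ?_⟩
      rintro f ⟨hf, hvf⟩
      rcases mem_swap.1 hf with ⟨hf, hC⟩ | ⟨hf, hC⟩
      · exact absurd (fun u hu => c₁ f hf v hvf u hu hvC) hC
      · exact hu f ⟨hf, hvf⟩
    · have hv1 : v ∈ s₁ := by simpa [hvC] using hv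
      obtain ⟨e, he, hu⟩ := h₁.2 v hv1
      refine ⟨e, ⟨mem_swap.2 (Or.inl ⟨he.1, fun h => hvC (h v he.2)⟩), he.2⟩, ?_⟩
      rintro f ⟨hf, hvf⟩
      rcases mem_swap.1 hf with ⟨hf, hC⟩ | ⟨hf, hC⟩
      · exact hu f ⟨hf, hvf⟩
      · exact absurd (hC v hvf) hvC

open Classical in
theorem restrict_pm {α : Type*} {G : SimpleGraph α} {C s : Finset α}
    {m : Finset (Sym2 α)} (h : IsPMOn G s m) (c : Closed C m) :
    IsPMOn G (s ∩ C) (m.filter (fun e => ∀ v ∈ e, v ∈ C)) := by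
  have h0 : IsPMOn G ∅ (∅ : Finset (Sym2 α)) := by constructor <;> simp
  have := swap_pm h0 h (C := C) (by intro e he; simp at he) c
  convert this using 1
  · simp
  · ext e; simp [mem_swap]

/-- The superposition graph. -/
def sup {α : Type*} (m₁ m₂ : Finset (Sym2 α)) : SimpleGraph α :=
  SimpleGraph.fromEdgeSet {e | e ∈ m₁ ∨ e ∈ m₂}

theorem sup_swap {α : Type*} {C : Finset α} {m₁ m₂ : Finset (Sym2 α)} :
    sup (swap C m₁ m₂) (swap C m₂ m₁) = sup m₁ m₂ := by
  unfold sup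
  congr 1
  ext e
  exact swap_or

theorem sup_le {α : Type*} {G : SimpleGraph α} {s₁ s₂ : Finset α}
    {m₁ m₂ : Finset (Sym2 α)} (h₁ : IsPMOn G s₁ m₁) (h₂ : IsPMOn G s₂ m₂) :
    sup m₁ m₂ ≤ G := by
  intro x y hxy
  rw [sup, SimpleGraph.fromEdgeSet_adj] at hxy
  rcases hxy.1 with h | h
  · exact (h₁.1 _ h).1
  · exact (h₂.1 _ h).1

theorem sup_closed {α : Type*} {C : Finset α} {m₁ m₂ : Finset (Sym2 α)}
    (hC : ∀ u v, (sup m₁ m₂).Adj u v → u ∈ C → v ∈ C) : Closed C m₁ ∧ Closed C m₂ := by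
  have key : ∀ e, (e ∈ m₁ ∨ e ∈ m₂) → ∀ u ∈ e, ∀ v ∈ e, u ∈ C → v ∈ C := by
    intro e he u hu v hv huC
    by_cases huv : u = v
    · exact huv ▸ huC
    · refine hC u v ?_ huC
      rw [sup, SimpleGraph.fromEdgeSet_adj]
      refine ⟨?_, huv⟩
      rw [← (Sym2.mem_and_mem_iff huv).1 ⟨hu, hv⟩]
      exact he
  exact ⟨fun e he => key e (Or.inl he), fun e he => key e (Or.inr he)⟩

open Classical in
/-- Each component meeting S has exactly two vertices of S. -/
theorem comp_card {α : Type*} [Fintype α] {G : SimpleGraph α} {s₁ s₂ S : Finset α}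
    {m₁ m₂ : Finset (Sym2 α)} (h₁ : IsPMOn G s₁ m₁) (h₂ : IsPMOn G s₂ m₂)
    (hu : s₁ ∪ s₂ = Finset.univ) (hS : ∀ v, v ∈ S ↔ ¬ (v ∈ s₁ ∧ v ∈ s₂))
    (x : α) (hx : x ∈ S) :
    (S.filter (fun v => (sup m₁ m₂).Reachable x v)).card = 2 := by
  set H := sup m₁ m₂ with hH
  set C : Finset α := Finset.univ.filter (fun v => H.Reachable x v) with hC
  have hmC : ∀ v, v ∈ C ↔ H.Reachable x v := by simp [hC]
  have hcl : ∀ u v, H.Adj u v → u ∈ C → v ∈ C := by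
    intro u v huv h
    rw [hmC] at h ⊢
    exact h.trans huv.reachable
  obtain ⟨c₁, c₂⟩ := sup_closed hcl
  have e₁ : (s₁ ∩ C).card = 2 * (m₁.filter (fun e => ∀ v ∈ e, v ∈ C)).card := by
    convert pm_card (restrict_pm h₁ c₁)
  have e₂ : (s₂ ∩ C).card = 2 * (m₂.filter (fun e => ∀ v ∈ e, v ∈ C)).card := by
    convert pm_card (restrict_pm h₂ c₂)
  have hSC : S.filter (fun v => H.Reachable x v) = S ∩ C := by
    ext v; simp [hmC]
  rw [hSC]
  have hcnt1 := Finset.card_union_add_card_inter (s₁ ∩ C) (s₂ ∩ C)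
  have hcnt2 : (s₁ ∩ C) ∪ (s₂ ∩ C) = C := by
    rw [← Finset.union_inter_distrib_right, hu, Finset.univ_inter]
  have hcnt3 : (s₁ ∩ C) ∩ (s₂ ∩ C) = C \ S := by
    ext v
    simp only [Finset.mem_inter, Finset.mem_sdiff, hS]
    tauto
  have hcnt4 := Finset.card_sdiff_add_card_inter C S
  rw [Finset.inter_comm C S] at hcnt4
  rw [hcnt2, hcnt3] at hcnt1
  have hpos : 0 < (S ∩ C).card := Finset.card_pos.2 ⟨x, by simp [hx, hmC]⟩
  have hconn : (H.induce {v | H.Reachable x v}).Connected := by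
    have := (H.connectedComponentMk x).connected_toSimpleGraph
    have hs : (H.connectedComponentMk x).supp = {v | H.Reachable x v} := by
      ext v
      simp only [SimpleGraph.ConnectedComponent.mem_supp_iff, SimpleGraph.ConnectedComponent.eq,
        Set.mem_ofPred_eq]
      exact SimpleGraph.reachable_comm
    rw [← hs]
    exact this
  have hle := hconn.card_vert_le_card_edgeSet_add_one
  have hv : Nat.card {v | H.Reachable x v} = C.card := by
    rw [Nat.card_eq_fintype_card, Fintype.card_subtype, hC]
    rfl
  have he : Nat.card (H.induce {v | H.Reachable x v}).edgeSet ≤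
      (m₁.filter (fun e => ∀ v ∈ e, v ∈ C)).card + (m₂.filter (fun e => ∀ v ∈ e, v ∈ C)).card := by
    refine le_trans ?_ (Finset.card_union_le _ _)
    rw [← Fintype.card_coe, ← Nat.card_eq_fintype_card]
    refine Nat.card_le_card_of_injective
      (fun e => ⟨Sym2.map Subtype.val e.1, ?_⟩) ?_
    · obtain ⟨e, he⟩ := e
      induction e with | _ u v
      rw [SimpleGraph.mem_edgeSet, SimpleGraph.induce_adj] at he
      have he := (SimpleGraph.fromEdgeSet_adj _).1 he
      have hu : u.1 ∈ C := (hmC _).2 u.2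
      have hv : v.1 ∈ C := (hmC _).2 v.2
      have := he.1
      simp only [Set.mem_ofPred_eq] at this
      simp [hu, hv, this]
    · intro e f hef
      simp only [Subtype.mk.injEq] at hef
      exact Subtype.ext (Sym2.map.injective Subtype.val_injective hef)
  rw [hv] at hle
  omega

open Classical in
theorem index_odd {α : Type*} [Fintype α] {G : SimpleGraph α} {s₁ s₂ : Finset α} {L : List α}
    {m₁ m₂ : Finset (Sym2 α)} (h₁ : IsPMOn G s₁ m₁) (h₂ : IsPMOn G s₂ m₂)
    (hu : s₁ ∪ s₂ = Finset.univ) (hS : ∀ v, v ∈ L ↔ ¬ (v ∈ s₁ ∧ v ∈ s₂))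
    (hnd : L.Nodup) (hnc : NoncrossingList G L) (p q : Fin L.length) (hpq : p < q)
    (hr : (sup m₁ m₂).Reachable (L.get p) (L.get q)) : Odd (q.val - p.val) := by
  set H := sup m₁ m₂ with hH
  have hinj : Function.Injective L.get := hnd.injective_get
  have hpart : ∀ r : Fin L.length, ∃ t, t ≠ r ∧ H.Reachable (L.get r) (L.get t) ∧
      ∀ u, H.Reachable (L.get r) (L.get u) → u = r ∨ u = t := by
    intro r
    have := comp_card h₁ h₂ hu (S := L.toFinset) (by simpa using hS) (L.get r) (by simp)
    rw [Finset.card_eq_two] at this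
    obtain ⟨x, y, hxy, he⟩ := this
    have hm : ∀ v, (v ∈ L ∧ H.Reachable (L.get r) v) ↔ v = x ∨ v = y := by
      intro v
      have := Finset.ext_iff.1 he v
      simpa using this
    have hother : ∃ z, z ≠ L.get r ∧ (z ∈ L ∧ H.Reachable (L.get r) z) ∧
        ∀ v, (v ∈ L ∧ H.Reachable (L.get r) v) → v = L.get r ∨ v = z := by
      rcases (hm (L.get r)).1 ⟨L.get_mem r, SimpleGraph.Reachable.refl _⟩ with h | h
      · exact ⟨y, by rw [h]; exact hxy.symm, (hm y).2 (Or.inr rfl),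
          fun v hv => by rw [h]; exact (hm v).1 hv⟩
      · exact ⟨x, by rw [h]; exact hxy, (hm x).2 (Or.inl rfl),
          fun v hv => by rw [h]; exact ((hm v).1 hv).symm⟩
    obtain ⟨z, hz1, ⟨hz2, hz3⟩, hz4⟩ := hother
    obtain ⟨t, rfl⟩ := List.get_of_mem hz2
    refine ⟨t, fun h => hz1 (h ▸ rfl), hz3, fun u hu => ?_⟩
    rcases hz4 _ ⟨L.get_mem u, hu⟩ with h | h
    · exact Or.inl (hinj h)
    · exact Or.inr (hinj h)
  choose f hf1 hf2 hf3 using hpart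
  have hff : ∀ r, f (f r) = r := by
    intro r
    rcases hf3 (f r) r (hf2 r).symm with h | h
    · exact absurd h.symm (hf1 r)
    · exact h.symm
  have hle : H ≤ G := sup_le h₁ h₂
  have hno : ∀ i j k l : Fin L.length, i < j → j < k → k < l → f i = k → f j = l → False := by
    intro i j k l hij hjk hkl hik hjl
    apply hnc i j k l hij hjk hkl
    have r1 : H.Reachable (L.get i) (L.get k) := hik ▸ hf2 i
    have r2 : H.Reachable (L.get j) (L.get l) := hjl ▸ hf2 j
    obtain ⟨P, hP⟩ := r1.exists_isPath
    obtain ⟨Q, hQ⟩ := r2.exists_isPath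
    have sP : ∀ u ∈ P.support, H.Reachable (L.get i) u := fun u hu => ⟨P.takeUntil u hu⟩
    have sQ : ∀ u ∈ Q.support, H.Reachable (L.get j) u := fun u hu => ⟨Q.takeUntil u hu⟩
    refine ⟨P.mapLe hle, Q.mapLe hle, hP.mapLe hle, hQ.mapLe hle, ?_, ?_, ?_⟩
    · intro u hu hu'
      rw [SimpleGraph.Walk.support_mapLe_eq_support] at hu hu'
      rcases hf3 i j ((sP u hu).trans (sQ u hu').symm) with h | h
      · exact hij.ne' h
      · rw [hik] at h; exact hjk.ne h
    · intro u hu n1 n2 huL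
      rw [SimpleGraph.Walk.support_mapLe_eq_support] at hu
      obtain ⟨t, rfl⟩ := List.get_of_mem huL
      rcases hf3 i t (sP _ hu) with h | h
      · exact n1 (h ▸ rfl)
      · rw [hik] at h; exact n2 (h ▸ rfl)
    · intro u hu n1 n2 huL
      rw [SimpleGraph.Walk.support_mapLe_eq_support] at hu
      obtain ⟨t, rfl⟩ := List.get_of_mem huL
      rcases hf3 j t (sQ _ hu) with h | h
      · exact n1 (h ▸ rfl)
      · rw [hjl] at h; exact n2 (h ▸ rfl)
  have hfp : f p = q := by
    rcases hf3 p q hr with h | h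
    · exact absurd h.symm hpq.ne
    · exact h.symm
  have hfq : f q = p := by rw [← hfp, hff]
  have hcl : ∀ r ∈ Finset.Ioo p q, f r ∈ Finset.Ioo p q := by
    intro r hr
    rw [Finset.mem_Ioo] at hr ⊢
    have e1 : f r ≠ p := by
      intro h; have := hff r; rw [h, hfp] at this; exact hr.2.ne' this
    have e2 : f r ≠ q := by
      intro h; have := hff r; rw [h, hfq] at this; exact hr.1.ne this
    constructor
    · by_contra h
      exact hno (f r) p r q (lt_of_le_of_ne (not_lt.1 h) e1) hr.1 hr.2 (hff r) hfp
    · by_contra h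
      exact hno p r q (f r) hr.1 hr.2 (lt_of_le_of_ne (not_lt.1 h) e2.symm) hfp rfl
  have hsum : ∑ r ∈ Finset.Ioo p q, (1 : ZMod 2) = 0 :=
    Finset.sum_involution (fun r _ => f r) (fun _ _ => by decide) (fun r _ _ => hf1 r)
      hcl (fun r _ => hff r)
  simp only [Finset.sum_const, Fin.card_Ioo, nsmul_eq_mul, mul_one] at hsum
  rw [ZMod.natCast_eq_zero_iff_even] at hsum
  have : p.val < q.val := hpq
  rw [Nat.odd_iff]
  rw [Nat.even_iff] at hsum
  omega

theorem get_even {α ι : Type*} (a b : ι → α) (l : List ι) (i : ℕ) :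
    (l.flatMap (fun i => [a i, b i]))[2 * i]? = (l[i]?).map a := by
  induction l generalizing i with
  | nil => simp
  | cons x l ih =>
    cases i with
    | zero => simp
    | succ i => simpa [Nat.mul_add] using ih i

theorem sep {α : Type*} [Fintype α] [DecidableEq α] {G : SimpleGraph α} {s₁ s₂ : Finset α}
    {m₁ m₂ : Finset (Sym2 α)} {k : ℕ} (a b : Fin k → α)
    (hdist : ((List.finRange k).flatMap (fun i => [a i, b i])).Nodup)
    (hnc : NoncrossingList G ((List.finRange k).flatMap (fun i => [a i, b i])))
    (h₁ : IsPMOn G s₁ m₁) (h₂ : IsPMOn G s₂ m₂) (hu : s₁ ∪ s₂ = Finset.univ)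
    (hS : ∀ v, v ∈ Finset.univ.image a ∪ Finset.univ.image b ↔ ¬ (v ∈ s₁ ∧ v ∈ s₂))
    (i j : Fin k) (hr : (sup m₁ m₂).Reachable (a i) (a j)) : i = j := by
  set L := (List.finRange k).flatMap (fun i => [a i, b i]) with hL
  have hidx : ∀ i : Fin k, ∃ p : Fin L.length, p.val = 2 * i.val ∧ L.get p = a i := by
    intro i
    have := get_even a b (List.finRange k) i.val
    rw [← hL] at this
    simp only [List.getElem?_eq_getElem, List.length_finRange, i.2, List.getElem_finRange,
      Option.map_some] at this
    obtain ⟨h, h'⟩ := List.getElem?_eq_some_iff.1 this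
    exact ⟨⟨_, h⟩, rfl, by simpa using h'⟩
  have hS' : ∀ v, v ∈ L ↔ ¬ (v ∈ s₁ ∧ v ∈ s₂) := by
    intro v
    rw [← hS]
    simp only [hL, List.mem_flatMap, List.mem_finRange, true_and, List.mem_cons,
      List.not_mem_nil, or_false, Finset.mem_union, Finset.mem_image, Finset.mem_univ]
    constructor
    · rintro ⟨i, h | h⟩
      · exact Or.inl ⟨i, h.symm⟩
      · exact Or.inr ⟨i, h.symm⟩
    · rintro (⟨i, h⟩ | ⟨i, h⟩)
      · exact ⟨i, Or.inl h.symm⟩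
      · exact ⟨i, Or.inr h.symm⟩
  have main : ∀ i j : Fin k, i < j → ¬ (sup m₁ m₂).Reachable (a i) (a j) := by
    intro i j hij hr
    obtain ⟨p, hp, hp'⟩ := hidx i
    obtain ⟨q, hq, hq'⟩ := hidx j
    rw [← hp', ← hq'] at hr
    have hij' : i.val < j.val := hij
    have hpq : p < q := Fin.lt_def.2 (by omega)
    have := index_odd h₁ h₂ (by convert hu) hS' hdist hnc p q hpq hr
    rw [Nat.odd_iff] at this
    omega
  rcases lt_trichotomy i j with h | h | h
  · exact absurd hr (main i j h)
  · exact h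
  · exact absurd hr.symm (main j i h)

open Classical in
/-- Vertices reachable from `X`. -/
noncomputable def reach {α : Type*} [Fintype α] (X : Finset α) (m₁ m₂ : Finset (Sym2 α)) :
    Finset α :=
  Finset.univ.filter (fun v => ∃ x ∈ X, (sup m₁ m₂).Reachable x v)

theorem mem_reach {α : Type*} [Fintype α] {X : Finset α} {m₁ m₂ : Finset (Sym2 α)} {v : α} :
    v ∈ reach X m₁ m₂ ↔ ∃ x ∈ X, (sup m₁ m₂).Reachable x v := by
  simp [reach]

theorem reach_closed {α : Type*} [Fintype α] {X : Finset α} {m₁ m₂ : Finset (Sym2 α)} :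
    Closed (reach X m₁ m₂) m₁ ∧ Closed (reach X m₁ m₂) m₂ := by
  apply sup_closed
  intro u v huv hu
  rw [mem_reach] at hu ⊢
  obtain ⟨x, hx, h⟩ := hu
  exact ⟨x, hx, h.trans huv.reachable⟩

theorem reach_swap {α : Type*} [Fintype α] {X C : Finset α} {m₁ m₂ : Finset (Sym2 α)} :
    reach X (swap C m₁ m₂) (swap C m₂ m₁) = reach X m₁ m₂ := by
  ext v
  rw [mem_reach, mem_reach, sup_swap]

theorem pmSum_odd {α R : Type*} [Fintype α] [DecidableEq α] [CommRing R]
    (G : SimpleGraph α) (w : Sym2 α → R) (s : Finset α) (h : s.card % 2 = 1) :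
    pmSum G w s = 0 := by
  classical
  unfold pmSum
  apply Finset.sum_eq_zero
  intro m hm
  have := pm_card (Finset.mem_filter.1 hm).2
  omega

open Classical in
noncomputable def dom {α : Type*} [Fintype α] [DecidableEq α]
    (G : SimpleGraph α) (B X Z : Finset α) :
    Finset (Finset α × Finset (Sym2 α) × Finset (Sym2 α)) :=
  Finset.univ.filter (fun t => t.1 ⊆ B ∧ IsPMOn G (Finset.univ \ (X ∪ t.1)) t.2.1 ∧
    IsPMOn G (Finset.univ \ (Z ∪ (B \ t.1))) t.2.2)

theorem mem_dom {α : Type*} [Fintype α] [DecidableEq α]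
    {G : SimpleGraph α} {B X Z : Finset α}
    {t : Finset α × Finset (Sym2 α) × Finset (Sym2 α)} :
    t ∈ dom G B X Z ↔ t.1 ⊆ B ∧ IsPMOn G (Finset.univ \ (X ∪ t.1)) t.2.1 ∧
    IsPMOn G (Finset.univ \ (Z ∪ (B \ t.1))) t.2.2 := by
  simp [dom]

theorem sum_dom {α R : Type*} [Fintype α] [DecidableEq α] [CommRing R]
    (G : SimpleGraph α) (w : Sym2 α → R) (B X Z : Finset α) :
    ∑ Y ∈ B.powerset, pmSum G w (Finset.univ \ (X ∪ Y)) *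
          pmSum G w (Finset.univ \ (Z ∪ (B \ Y))) =
    ∑ t ∈ dom G B X Z, (∏ e ∈ t.2.1, w e) * (∏ e ∈ t.2.2, w e) := by
  classical
  unfold pmSum
  simp_rw [Finset.sum_mul_sum, ← Finset.sum_product']
  rw [Finset.sum_sigma']
  refine Finset.sum_bij' (fun t _ => (t.1, t.2.1, t.2.2)) (fun t _ => ⟨t.1, t.2.1, t.2.2⟩)
    ?_ ?_ ?_ ?_ ?_
  · rintro ⟨Y, m₁, m₂⟩ h
    simp only [Finset.mem_sigma, Finset.mem_powerset, Finset.mem_product, Finset.mem_filter,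
      Finset.mem_univ, true_and] at h
    exact mem_dom.2 h
  · rintro ⟨Y, m₁, m₂⟩ h
    simp only [Finset.mem_sigma, Finset.mem_powerset, Finset.mem_product, Finset.mem_filter,
      Finset.mem_univ, true_and]
    exact mem_dom.1 h
  · intros; rfl
  · intros; rfl
  · intros; rfl

/-- The switching map. -/
noncomputable def phi {α : Type*} [Fintype α] [DecidableEq α] (B X : Finset α)
    (t : Finset α × Finset (Sym2 α) × Finset (Sym2 α)) :
    Finset α × Finset (Sym2 α) × Finset (Sym2 α) :=
  ((t.1 \ reach X t.2.1 t.2.2) ∪ ((B \ t.1) ∩ reach X t.2.1 t.2.2),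
    swap (reach X t.2.1 t.2.2) t.2.1 t.2.2, swap (reach X t.2.1 t.2.2) t.2.2 t.2.1)

theorem phi_phi {α : Type*} [Fintype α] [DecidableEq α] (B X : Finset α)
    (t : Finset α × Finset (Sym2 α) × Finset (Sym2 α)) (ht : t.1 ⊆ B) :
    phi B X (phi B X t) = t := by
  obtain ⟨Y, m₁, m₂⟩ := t
  simp only [phi, reach_swap, swap_swap, Prod.mk.injEq, and_true]
  ext v
  have : v ∈ Y → v ∈ B := fun h => ht h
  simp only [Finset.mem_union, Finset.mem_sdiff, Finset.mem_inter]
  tauto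

theorem phi_mem {α : Type*} [Fintype α] [DecidableEq α] {G : SimpleGraph α} {k : ℕ}
    (a b : Fin k → α)
    (hdist : ((List.finRange k).flatMap (fun i => [a i, b i])).Nodup)
    (hnc : NoncrossingList G ((List.finRange k).flatMap (fun i => [a i, b i])))
    (A B : Finset α) (hA : A = Finset.univ.image a) (hB : B = Finset.univ.image b)
    (hAB : Disjoint A B)
    (A₁ X Z X' Z' : Finset α) (hA₁ : A₁ ⊆ A)
    (hX : ∀ v, v ∈ X → v ∈ A) (hZ : ∀ v, v ∈ Z ↔ v ∈ A ∧ v ∉ X)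
    (hX' : ∀ v, v ∈ X' ↔ (v ∈ X ∧ v ∉ A₁) ∨ (v ∈ Z ∧ v ∈ A₁))
    (hZ' : ∀ v, v ∈ Z' ↔ (v ∈ Z ∧ v ∉ A₁) ∨ (v ∈ X ∧ v ∈ A₁))
    (t : Finset α × Finset (Sym2 α) × Finset (Sym2 α)) (ht : t ∈ dom G B X Z) :
    phi B A₁ t ∈ dom G B X' Z' := by
  obtain ⟨Y, m₁, m₂⟩ := t
  rw [mem_dom] at ht
  obtain ⟨hY, h₁, h₂⟩ := ht
  dsimp only at hY h₁ h₂
  have hd : ∀ v, v ∈ A → v ∉ B := fun v h h' => Finset.disjoint_left.1 hAB h h'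
  have hCA : ∀ v, v ∈ A → (v ∈ reach A₁ m₁ m₂ ↔ v ∈ A₁) := by
    intro v hv
    rw [mem_reach]
    constructor
    · rintro ⟨x, hx, hr⟩
      have hxA := hA₁ hx
      rw [hA, Finset.mem_image] at hxA hv
      obtain ⟨i, -, rfl⟩ := hxA
      obtain ⟨j, -, rfl⟩ := hv
      have := sep a b hdist hnc h₁ h₂ ?_ ?_ i j hr
      · rwa [← this]
      · ext v
        have := @hY v
        have := hX v
        have := hZ v
        have := hd v
        simp only [Finset.mem_union, Finset.mem_sdiff, Finset.mem_univ, true_and, iff_true]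
        tauto
      · intro v
        rw [← hA, ← hB]
        have := @hY v
        have := hX v
        have := hZ v
        have := hd v
        simp only [Finset.mem_union, Finset.mem_sdiff, Finset.mem_univ, true_and]
        tauto
    · intro h
      exact ⟨v, h, SimpleGraph.Reachable.refl _⟩
  obtain ⟨c₁, c₂⟩ := reach_closed (X := A₁) (m₁ := m₁) (m₂ := m₂)
  rw [mem_dom]
  refine ⟨?_, ?_, ?_⟩
  · intro v
    have := @hY v
    simp only [phi, Finset.mem_union, Finset.mem_sdiff, Finset.mem_inter]
    tauto
  · change IsPMOn G _ (swap (reach A₁ m₁ m₂) m₁ m₂)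
    convert swap_pm h₁ h₂ c₁ c₂ using 1
    ext v
    have := @hY v
    have := hX v
    have := hZ v
    have := hX' v
    have := hd v
    have := hCA v
    simp only [phi, Finset.mem_union, Finset.mem_sdiff, Finset.mem_inter, Finset.mem_univ,
      true_and]
    clear hY hX hZ hX' hZ' hd hCA c₁ c₂ h₁ h₂
    grind
  · change IsPMOn G _ (swap (reach A₁ m₁ m₂) m₂ m₁)
    convert swap_pm h₂ h₁ c₂ c₁ using 1
    ext v
    have := @hY v
    have := hX v
    have := hZ v
    have := hZ' v
    have := hd v
    have := hCA v
    simp only [phi, Finset.mem_union, Finset.mem_sdiff, Finset.mem_inter, Finset.mem_univ,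
      true_and]
    clear hY hX hZ hX' hZ' hd hCA c₁ c₂ h₁ h₂
    grind

end GC

/-- Generalized graphical condensation, odd number of vertices (Theorem 2.6). -/
theorem generalized_condensation_odd {α R : Type*} [Fintype α] [DecidableEq α] [CommRing R]
    (G : SimpleGraph α) (w : Sym2 α → R) (n k : ℕ)
    (hcard : Fintype.card α = 2 * n + 1) (hk2 : 2 ≤ k) (hkn : k ≤ n)
    (a b : Fin k → α)
    (hdist : ((List.finRange k).flatMap (fun i => [a i, b i])).Nodup)
    (hnc : NoncrossingList G ((List.finRange k).flatMap (fun i => [a i, b i])))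
    (A B : Finset α) (hA : A = Finset.univ.image a) (hB : B = Finset.univ.image b)
    (A₁ A₂ : Finset α) (hpart : A₁ ∪ A₂ = A) (hdisj : Disjoint A₁ A₂) :
    ∑ W ∈ B.powerset.filter (fun W => Odd W.card),
        pmSum G w (Finset.univ \ W) * pmSum G w (Finset.univ \ (A ∪ (B \ W))) =
    ∑ Y ∈ B.powerset.filter (fun Y => Y.card % 2 ≠ A₁.card % 2),
        pmSum G w (Finset.univ \ (A₁ ∪ Y)) *
          pmSum G w (Finset.univ \ (A₂ ∪ (B \ Y))) := by
  have hdist' := hdist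
  have hnd : (∀ i j, a i ≠ b j) ∧ Function.Injective b := by
    rw [List.nodup_flatMap] at hdist'
    obtain ⟨h1, h2⟩ := hdist'
    have h3 : ∀ i j : Fin k, i ≠ j → List.Disjoint [a i, b i] [a j, b j] := by
      intro i j hij
      have : Std.Symm (Function.onFun List.Disjoint fun i : Fin k => [a i, b i]) :=
        ⟨fun x y h => List.Disjoint.symm h⟩
      exact h2.forall (List.mem_finRange i)
        (List.mem_finRange j) hij
    constructor
    · intro i j hij
      by_cases h : i = j
      · subst h
        have := h1 i (List.mem_finRange i)
        simp [hij] at this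
      · exact h3 i j h (a := a i) (by simp) (by simp [hij])
    · intro i j hij
      by_contra h
      exact h3 i j h (a := b i) (by simp) (by simp [hij])
  have hAB : Disjoint A B := by
    rw [Finset.disjoint_left, hA, hB]
    intro v h h'
    simp only [Finset.mem_image, Finset.mem_univ, true_and] at h h'
    obtain ⟨i, rfl⟩ := h
    obtain ⟨j, hj⟩ := h'
    exact hnd.1 i j hj.symm
  have hA₁ : A₁ ⊆ A := hpart ▸ Finset.subset_union_left
  have hmA : ∀ v, v ∈ A ↔ v ∈ A₁ ∨ v ∈ A₂ := by intro v; rw [← hpart, Finset.mem_union]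
  have hd12 : ∀ v, v ∈ A₁ → v ∉ A₂ := fun v h h' => Finset.disjoint_left.1 hdisj h h'
  have hL : ∑ W ∈ B.powerset.filter (fun W => Odd W.card),
        pmSum G w (Finset.univ \ W) * pmSum G w (Finset.univ \ (A ∪ (B \ W))) =
      ∑ W ∈ B.powerset, pmSum G w (Finset.univ \ (∅ ∪ W)) *
        pmSum G w (Finset.univ \ (A ∪ (B \ W))) := by
    simp only [Finset.empty_union]
    refine Finset.sum_filter_of_ne fun W hW hne => ?_
    by_contra hodd
    apply hne
    rw [GC.pmSum_odd, zero_mul]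
    rw [Nat.not_odd_iff] at hodd
    have := Finset.card_sdiff_add_card_eq_card (Finset.subset_univ W)
    rw [Finset.card_univ] at this
    omega
  have hR : ∑ Y ∈ B.powerset.filter (fun Y => Y.card % 2 ≠ A₁.card % 2),
        pmSum G w (Finset.univ \ (A₁ ∪ Y)) *
          pmSum G w (Finset.univ \ (A₂ ∪ (B \ Y))) =
      ∑ Y ∈ B.powerset, pmSum G w (Finset.univ \ (A₁ ∪ Y)) *
          pmSum G w (Finset.univ \ (A₂ ∪ (B \ Y))) := by
    refine Finset.sum_filter_of_ne fun Y hY hne => ?_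
    intro hmod
    apply hne
    rw [GC.pmSum_odd, zero_mul]
    have := Finset.card_sdiff_add_card_eq_card (Finset.subset_univ (A₁ ∪ Y))
    rw [Finset.card_univ, Finset.card_union_of_disjoint
      (Finset.disjoint_of_subset_left hA₁
        (Finset.disjoint_of_subset_right (Finset.mem_powerset.1 hY) hAB))] at this
    omega
  rw [hL, hR, GC.sum_dom, GC.sum_dom]
  refine Finset.sum_bij' (fun t _ => GC.phi B A₁ t) (fun t _ => GC.phi B A₁ t) ?_ ?_ ?_ ?_ ?_
  · intro t ht
    refine GC.phi_mem a b hdist hnc A B hA hB hAB A₁ ∅ A A₁ A₂ hA₁ (by simp) (by simp) ?_ ?_ t ht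
    · intro v; have := hmA v; have := hd12 v; simp; tauto
    · intro v; have := hmA v; have := hd12 v; simp; tauto
  · intro t ht
    refine GC.phi_mem a b hdist hnc A B hA hB hAB A₁ A₁ A₂ ∅ A hA₁ (fun v h => hA₁ h)
      ?_ ?_ ?_ t ht
    · intro v; have := hmA v; have := hd12 v; tauto
    · intro v; have := hmA v; have := hd12 v; simp; tauto
    · intro v; have := hmA v; have := hd12 v; tauto
  · intro t ht
    exact GC.phi_phi B A₁ t (GC.mem_dom.1 ht).1
  · intro t ht
    exact GC.phi_phi B A₁ t (GC.mem_dom.1 ht).1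
  · intro t ht
    exact (GC.swap_prod w).symm
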